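/- Let λ be a nonzero real number and let F : ℝ × ℝ³ → ℝ. Assume: (existence of local solutions with arbitrary initial data) for every x₀ ∈ ℝ and every (u₀,u₁,u₂) ∈ ℝ³ there is an open interval I containing x₀ and a solution y on I with y(x₀)=u₀, y'(x₀)=u₁, y''(x₀)=u₂; (invariance of the solution set) whenever y is a solution on an open interval I, then for every c ∈ ℝ the functions x ↦ y(x)+c, x ↦ y(x)+c·e^{λx} and x ↦ y(x)+c·x·e^{λx} are solutions on I, for every c ∈ ℝ the function x ↦ y(x+c) is a solution on I − c, and for every κ ≠ 0 the function x ↦ κ·y(x) is a solution on I. Then F(x, u₀, u₁, u₂) = 2λ·u₂ − λ²·u₁ for all x, u₀, u₁, u₂, i.e. the equation is y''' − 2λ y'' + λ² y' = 0. (This is the repeated-eigenvalue case of Remark 4.3, with symmetry algebra ⟨∂_x, y∂_y, ∂_y, e^{λx}∂_y, xe^{λx}∂_y⟩.) -/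

import Mathlib

/-- `y` is a solution of `y''' = F(x, y, y', y'')` on the set `I`. -/
def IsSolution3 (F : ℝ → ℝ → ℝ → ℝ → ℝ) (y : ℝ → ℝ) (I : Set ℝ) : Prop :=
  (∀ x ∈ I, DifferentiableAt ℝ y x ∧ DifferentiableAt ℝ (deriv y) x ∧
    DifferentiableAt ℝ (deriv^[2] y) x) ∧
  ∀ x ∈ I, deriv^[3] y x = F x (y x) (deriv y x) (deriv^[2] y x)

/-- `I` is an open interval of `ℝ`. -/
def IsOpenInterval (I : Set ℝ) : Prop := IsOpen I ∧ I.OrdConnected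

/-!
Write `L(u₁, u₂) = 2λu₂ - λ²u₁`. Since `λ ≠ 0`, the functions `1`, `e^{λx}` and `xe^{λx}` form a
fundamental system of `g''' = L(g', g'')`, so every 2-jet at a point `x` is the 2-jet of one of
their combinations `g`. Adding such combinations to one solution `y` reaches every 2-jet at `x` and
shows that `F(x, u₀, u₁, u₂) - L(u₁, u₂)` does not depend on `u₀, u₁, u₂`. Comparing `y` with `κy`
shows that this constant `δ` satisfies `δ = κδ`, so it vanishes as soon as `κ ≠ 1`.
-/

section IteratedDerivatives

variable {𝕜 E : Type*} [NontriviallyNormedField 𝕜] [NormedAddCommGroup E] [NormedSpace 𝕜 E]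

theorem iterate_deriv_add_eqOn {s : Set 𝕜} (hs : IsOpen s) {f g : 𝕜 → E} {n : ℕ}
    (hf : ∀ k < n, ∀ x ∈ s, DifferentiableAt 𝕜 (deriv^[k] f) x)
    (hg : ∀ k < n, ∀ x ∈ s, DifferentiableAt 𝕜 (deriv^[k] g) x) :
    s.EqOn (deriv^[n] (fun x ↦ f x + g x)) (fun x ↦ deriv^[n] f x + deriv^[n] g x) := by
  induction n with
  | zero => exact fun _ _ ↦ rfl
  | succ n ih =>
    have ih := ih (fun k hk ↦ hf k (by lia)) (fun k hk ↦ hg k (by lia))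
    intro x hx
    simp only [Function.iterate_succ_apply']
    rw [(ih.eventuallyEq_of_mem (hs.mem_nhds hx)).deriv_eq]
    exact deriv_fun_add (hf n n.lt_succ_self x hx) (hg n n.lt_succ_self x hx)

theorem iterate_deriv_const_mul (κ : 𝕜) (f : 𝕜 → 𝕜) (n : ℕ) :
    deriv^[n] (fun x ↦ κ * f x) = fun x ↦ κ * deriv^[n] f x := by
  funext x
  simpa only [iteratedDeriv_eq_iterate] using iteratedDeriv_const_mul_field κ f

end IteratedDerivatives

namespace IsSolution3

variable {F G : ℝ → ℝ → ℝ → ℝ → ℝ} {y g : ℝ → ℝ} {I : Set ℝ} {x κ : ℝ}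

theorem differentiableAt_iterate_deriv (hy : IsSolution3 F y I) {k : ℕ} (hk : k < 3)
    (hx : x ∈ I) : DifferentiableAt ℝ (deriv^[k] y) x := by
  obtain ⟨h₀, h₁, h₂⟩ := hy.1 x hx
  interval_cases k
  exacts [h₀, h₁, h₂]

theorem iterate_deriv_add (hI : IsOpen I) (hy : IsSolution3 F y I) (hg : IsSolution3 G g I)
    {n : ℕ} (hn : n ≤ 3) (hx : x ∈ I) :
    deriv^[n] (fun t ↦ y t + g t) x = deriv^[n] y x + deriv^[n] g x :=
  iterate_deriv_add_eqOn hI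
    (fun _ hk _ ht ↦ hy.differentiableAt_iterate_deriv (hk.trans_le hn) ht)
    (fun _ hk _ ht ↦ hg.differentiableAt_iterate_deriv (hk.trans_le hn) ht) hx

theorem apply_add_jet (hI : IsOpen I) (hy : IsSolution3 F y I) (hg : IsSolution3 G g I)
    (hyg : IsSolution3 F (fun t ↦ y t + g t) I) (hx : x ∈ I) :
    F x (y x + g x) (deriv y x + deriv g x) (deriv^[2] y x + deriv^[2] g x) =
      deriv^[3] y x + deriv^[3] g x := by
  have h₁ : deriv (fun t ↦ y t + g t) x = deriv y x + deriv g x :=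
    deriv_fun_add (hy.1 x hx).1 (hg.1 x hx).1
  rw [← h₁, ← iterate_deriv_add hI hy hg (by lia) hx, ← iterate_deriv_add hI hy hg le_rfl hx]
  exact (hyg.2 x hx).symm

theorem apply_const_mul_jet (hκy : IsSolution3 F (fun t ↦ κ * y t) I) (hx : x ∈ I) :
    F x (κ * y x) (κ * deriv y x) (κ * deriv^[2] y x) = κ * deriv^[3] y x := by
  have hsol := hκy.2 x hx
  simp only [iterate_deriv_const_mul, deriv_const_mul_field] at hsol
  exact hsol.symm

end IsSolution3

/-- The combination `a + b e^{λt} + c t e^{λt}` of the fundamental system of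
`y''' - 2λy'' + λ²y' = 0`. -/
noncomputable def expCombination (lam a b c : ℝ) (t : ℝ) : ℝ :=
  a + b * Real.exp (lam * t) + c * t * Real.exp (lam * t)

section ExpCombination

variable (lam a b c : ℝ)

theorem differentiable_expCombination : Differentiable ℝ (expCombination lam a b c) := by
  unfold expCombination
  fun_prop

theorem deriv_expCombination :
    deriv (expCombination lam a b c) = expCombination lam 0 (lam * b + c) (lam * c) := by
  funext t
  have hexp : HasDerivAt (fun s ↦ Real.exp (lam * s)) (Real.exp (lam * t) * (lam * 1)) t :=
    ((hasDerivAt_id t).const_mul lam).exp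
  have hderiv := ((hexp.const_mul b).const_add a).add
    (((hasDerivAt_id t).const_mul c).mul hexp)
  refine hderiv.deriv.trans ?_
  simp only [expCombination, id]
  ring

theorem isSolution3_expCombination (I : Set ℝ) :
    IsSolution3 (fun _ _ u₁ u₂ ↦ 2 * lam * u₂ - lam ^ 2 * u₁) (expCombination lam a b c) I := by
  simp only [IsSolution3, Function.iterate_succ, Function.iterate_zero, Function.comp_apply, id,
    deriv_expCombination]
  refine ⟨fun x _ ↦ ⟨?_, ?_, ?_⟩, fun x _ ↦ ?_⟩
  iterate 3 exact differentiable_expCombination _ _ _ _ x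
  simp only [expCombination]
  ring

theorem exists_expCombination_jet_eq {lam : ℝ} (hlam : lam ≠ 0) (x v₀ v₁ v₂ : ℝ) :
    ∃ a b c, expCombination lam a b c x = v₀ ∧ deriv (expCombination lam a b c) x = v₁ ∧
      deriv^[2] (expCombination lam a b c) x = v₂ := by
  -- With `E = e^{λx}`: `g'' - λg' = λcE` gives `c`, then `g' = (λb + c + λcx)E` gives `b`.
  let c := (v₂ - lam * v₁) / (lam * Real.exp (lam * x))
  let b := (v₁ / Real.exp (lam * x) - c - lam * c * x) / lam
  refine ⟨v₀ - (b + c * x) * Real.exp (lam * x), b, c, ?_, ?_, ?_⟩ <;>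
    simp only [Function.iterate_succ, Function.iterate_zero, Function.comp_apply, id,
      deriv_expCombination, expCombination, b, c] <;>
    field_simp <;> ring

end ExpCombination

section Uniqueness

variable {lam : ℝ} {F : ℝ → ℝ → ℝ → ℝ → ℝ} {I : Set ℝ} {y : ℝ → ℝ} {x : ℝ}

theorem IsSolution3.apply_sub_eq_of_add_expCombination (hlam : lam ≠ 0) (hI : IsOpen I)
    (hy : IsSolution3 F y I)
    (hadd : ∀ a b c, IsSolution3 F (fun t ↦ y t + expCombination lam a b c t) I)
    (hx : x ∈ I) (u₀ u₁ u₂ : ℝ) :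
    F x u₀ u₁ u₂ - (2 * lam * u₂ - lam ^ 2 * u₁) =
      deriv^[3] y x - (2 * lam * deriv^[2] y x - lam ^ 2 * deriv y x) := by
  obtain ⟨a, b, c, h₀, h₁, h₂⟩ := exists_expCombination_jet_eq hlam x
    (u₀ - y x) (u₁ - deriv y x) (u₂ - deriv^[2] y x)
  have hg := isSolution3_expCombination lam a b c I
  have hjet := hy.apply_add_jet hI hg (hadd a b c) hx
  rw [hg.2 x hx, h₀, h₁, h₂] at hjet
  simp only [add_sub_cancel] at hjet
  rw [hjet]
  ring

theorem uniqueness_of_invariant_equation_dim5_repeated_general {κ : ℝ} (hlam : lam ≠ 0)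
    (hκ : κ ≠ 1) (hI : IsOpen I) (hy : IsSolution3 F y I)
    (hconst : ∀ c z, IsSolution3 F z I → IsSolution3 F (fun t ↦ z t + c) I)
    (hexp : ∀ c z, IsSolution3 F z I → IsSolution3 F (fun t ↦ z t + c * Real.exp (lam * t)) I)
    (hmulexp : ∀ c z, IsSolution3 F z I →
      IsSolution3 F (fun t ↦ z t + c * t * Real.exp (lam * t)) I)
    (hscale : ∀ z, IsSolution3 F z I → IsSolution3 F (fun t ↦ κ * z t) I)
    (hx : x ∈ I) (u₀ u₁ u₂ : ℝ) :
    F x u₀ u₁ u₂ = 2 * lam * u₂ - lam ^ 2 * u₁ := by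
  have hadd (a b c : ℝ) : IsSolution3 F (fun t ↦ y t + expCombination lam a b c t) I := by
    simpa only [expCombination, add_assoc] using hmulexp c _ (hexp b _ (hconst a y hy))
  have hdefect := hy.apply_sub_eq_of_add_expCombination hlam hI hadd hx
  set δ := deriv^[3] y x - (2 * lam * deriv^[2] y x - lam ^ 2 * deriv y x) with hδ
  have hδ_scale : κ * δ = δ := by
    have hκ_defect := hdefect (κ * y x) (κ * deriv y x) (κ * deriv^[2] y x)
    rw [(hscale y hy).apply_const_mul_jet hx] at hκ_defect
    linear_combination hκ_defect + κ * hδ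
  have hδ_zero : δ = 0 := by
    by_contra hne
    exact hκ ((mul_eq_right₀ hne).mp hδ_scale)
  exact sub_eq_zero.mp ((hdefect u₀ u₁ u₂).trans hδ_zero)

end Uniqueness

theorem uniqueness_of_invariant_equation_dim5_repeated
    (lam : ℝ) (hlam : lam ≠ 0)
    (F : ℝ → ℝ → ℝ → ℝ → ℝ)
    (hexist : ∀ x₀ u₀ u₁ u₂ : ℝ, ∃ I : Set ℝ, ∃ y : ℝ → ℝ,
      IsOpenInterval I ∧ x₀ ∈ I ∧ IsSolution3 F y I ∧
      y x₀ = u₀ ∧ deriv y x₀ = u₁ ∧ deriv^[2] y x₀ = u₂)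
    (hinv : ∀ I : Set ℝ, ∀ y : ℝ → ℝ, IsOpenInterval I → IsSolution3 F y I →
      (∀ c : ℝ, IsSolution3 F (fun x => y x + c) I) ∧
      (∀ c : ℝ, IsSolution3 F (fun x => y x + c * Real.exp (lam * x)) I) ∧
      (∀ c : ℝ, IsSolution3 F (fun x => y x + c * x * Real.exp (lam * x)) I) ∧
      (∀ c : ℝ, IsSolution3 F (fun x => y (x + c)) {x : ℝ | x + c ∈ I}) ∧
      (∀ κ : ℝ, κ ≠ 0 → IsSolution3 F (fun x => κ * y x) I)) :
    ∀ x u₀ u₁ u₂ : ℝ, F x u₀ u₁ u₂ = 2 * lam * u₂ - lam ^ 2 * u₁ := by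
  intro x u₀ u₁ u₂
  obtain ⟨I, y, hI, hx, hy, -⟩ := hexist x u₀ u₁ u₂
  exact uniqueness_of_invariant_equation_dim5_repeated_general hlam (OfNat.ofNat_ne_one 2) hI.1 hy
    (fun c z hz ↦ (hinv I z hI hz).1 c) (fun c z hz ↦ (hinv I z hI hz).2.1 c)
    (fun c z hz ↦ (hinv I z hI hz).2.2.1 c)
    (fun z hz ↦ (hinv I z hI hz).2.2.2.2 2 two_ne_zero) hx u₀ u₁ u₂
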